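/- For every d ∈ ℕ there is a constant C_d > 0 such that: if α ∈ (0,1/2), ρ ∈ (0,1], and μ is a mean (α,ρ)-porous Borel probability measure on ℝ^d, then the upper packing dimension of μ satisfies udim_P(μ) ≤ d − ρ + C_d/|log(1−2α)|. -/

import Mathlib

open MeasureTheory Filter Metric Set
open scoped Classical

/-- `por(μ,x,r,ε)`: the supremum of `α ≥ 0` such that some ball `B(y,αr) ⊆ B(x,r)` has
`μ(B(y,αr)) ≤ ε·μ(B(x,r))` (an "ε-hole" of relative size `α`). -/
noncomputable def porMeas {X : Type*} [MetricSpace X] [MeasurableSpace X]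
    (μ : Measure X) (x : X) (r ε : ℝ) : ℝ :=
  sSup {α : ℝ | 0 ≤ α ∧ ∃ y, Metric.ball y (α * r) ⊆ Metric.ball x r ∧
    μ (Metric.ball y (α * r)) ≤ ENNReal.ofReal ε * μ (Metric.ball x r)}

/-- `μ` is mean `(α,ρ)`-porous: for every `ε > 0`, at `μ`-a.e. point the lower asymptotic
proportion of scales `i` with `por(μ,x,2^{-i},ε) > α` is at least `ρ`. -/
def IsMeanPorous {X : Type*} [MetricSpace X] [MeasurableSpace X]
    (μ : Measure X) (α ρ : ℝ) : Prop :=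
  ∀ ε : ℝ, 0 < ε → ∀ᵐ x ∂μ,
    ρ ≤ Filter.liminf (fun n : ℕ =>
      (((Finset.range n).filter fun i => α < porMeas μ x ((2 : ℝ) ^ (-(i : ℤ))) ε).card : ℝ) / n)
      atTop

/-- The upper local dimension of a measure at a point. -/
noncomputable def upperLocalDim {X : Type*} [MetricSpace X] [MeasurableSpace X]
    (μ : Measure X) (x : X) : EReal :=
  Filter.limsup (fun r : ℝ =>
    ((Real.log (μ (Metric.ball x r)).toReal / Real.log r : ℝ) : EReal))
    (nhdsWithin 0 (Set.Ioi 0))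

/-- The upper packing dimension of a measure: the `μ`-essential supremum of the upper
local dimensions. -/
noncomputable def upperPackingDim {X : Type*} [MetricSpace X] [MeasurableSpace X]
    (μ : Measure X) : EReal :=
  essSup (upperLocalDim μ) μ

/-!
Cut the scales `2⁻ⁱ` into blocks of length `L ≈ -log₂ (1 - 2α)`. A hole of relative size greater
than `α` around `x` is then, up to the resolution of the block, a ball of radius `2⁻ⁱ / 2` with `x`
on its boundary or inside it. By Borel–Cantelli almost every point is rarely deep inside a hole,
holes having relative measure at most `ε`.

Work in the tree of cells of `2 ^ (-k * L)`-nets. If the coarsest boundary through a cell of the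
block is at scale `i`, give the cell the weight `2 ^ gain`, where the gain is the number of scales
from `i` to the end of the block; it is at least the number of porous scales in the block, up to a
constant. By Kneser's inequality for the volume of neighbourhoods, the boundary layer of the union
of the holes of a given scale is, up to a constant, smaller by the factor `2 ^ (-gain)` than this
union, even after the radii in the latter are divided by eight. These shrunken unions are disjoint
for different scales, so the total weight of the subcells of a cell is at most `C * 2 ^ (d * L)`.
Hence at almost every point the product of the weights of the first `k` cells is, up to a factor
`C ^ k * 2 ^ (d * k * L)`, dominated by the measure of the `k`-th cell. As the gains add up to about
`ρ * k * L`, the upper local dimension is at most `d - ρ + O(1 / L)`.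
-/

open Module

section Metric

variable {X : Type*} [MetricSpace X]

/-- `π` moves every point by at most `s` and its values are `s`-separated: a choice, for every
point, of an `s`-close element of some `s`-net. Its fibres play the role of the dyadic cubes. -/
structure IsNetProjection (s : ℝ) (π : X → X) : Prop where
  dist_le : ∀ x, dist x (π x) ≤ s
  pairwise_le_dist : (range π).Pairwise (s ≤ dist · ·)

theorem exists_isNetProjection {s : ℝ} (hs : 0 ≤ s) : ∃ π : X → X, IsNetProjection s π := by
  obtain ⟨N, hN⟩ := zorn_subset {N : Set X | N.Pairwise (s ≤ dist · ·)} fun c hc hchain =>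
    ⟨⋃₀ c, (pairwise_sUnion hchain.directedOn).2 hc, fun _ => subset_sUnion_of_mem⟩
  have hclose : ∀ x, ∃ y ∈ N, dist x y ≤ s := by
    intro x
    by_contra! hfar
    have hinsert : (insert x N).Pairwise (s ≤ dist · ·) :=
      hN.1.insert fun y hy _ => ⟨(hfar y hy).le, dist_comm x y ▸ (hfar y hy).le⟩
    have hxN : x ∈ N := hN.2 hinsert (subset_insert x N) (mem_insert x N)
    exact (hfar x hxN).not_ge (by simpa using hs)
  choose π hπN hπ using hclose
  exact ⟨π, hπ, hN.1.mono (range_subset_iff.2 hπN)⟩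

theorem pairwiseDisjoint_ball_of_pairwise_le_dist {s : ℝ} {N : Set X}
    (hN : N.Pairwise (s ≤ dist · ·)) :
    N.PairwiseDisjoint (ball · (s / 2)) :=
  fun _ hx _ hy hxy => ball_disjoint_ball ((add_halves s).trans_le (hN hx hy hxy))

theorem countable_of_pairwise_le_dist [SecondCountableTopology X] {s : ℝ} (hs : 0 < s) {N : Set X}
    (hN : N.Pairwise (s ≤ dist · ·)) : N.Countable :=
  (pairwiseDisjoint_ball_of_pairwise_le_dist hN).countable_of_isOpen (fun _ _ => isOpen_ball)
    fun _ _ => nonempty_ball.2 (half_pos hs)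

/-- The Voronoi cell of the site `y a`: the points whose nearest site is `y a`, ties being broken
in favour of the smallest index. -/
def voronoiCell {ι : Type*} [LinearOrder ι] (y : ι → X) (a : ι) : Set X :=
  {z | (∀ b, dist z (y a) ≤ dist z (y b)) ∧ ∀ b < a, dist z (y a) < dist z (y b)}

section Voronoi

variable {ι : Type*} [LinearOrder ι] {y : ι → X}

theorem measurableSet_voronoiCell [MeasurableSpace X] [OpensMeasurableSpace X] [Countable ι]
    (a : ι) : MeasurableSet (voronoiCell y a) := by
  simp only [voronoiCell, ofPred_and, ofPred_forall]
  exact (MeasurableSet.iInter fun b =>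
      (isClosed_le (by fun_prop) (by fun_prop)).measurableSet).inter
    (MeasurableSet.iInter fun b => MeasurableSet.iInter fun _ =>
      (isOpen_lt (by fun_prop) (by fun_prop)).measurableSet)

theorem pairwise_disjoint_voronoiCell : Pairwise (Function.onFun Disjoint (voronoiCell y)) :=
  (pairwise_disjoint_on _).2 fun a b hab =>
    disjoint_left.2 fun _ hza hzb => (hzb.2 a hab).not_ge (hza.1 b)

theorem iUnion_ball_inter_voronoiCell [Finite ι] (r : ℝ) :
    ⋃ a, ball (y a) r ∩ voronoiCell y a = ⋃ a, ball (y a) r := by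
  refine (iUnion_mono fun a => inter_subset_left).antisymm ?_
  refine iUnion_subset fun b z hz => ?_
  have : Nonempty ι := ⟨b⟩
  obtain ⟨a, ha⟩ := Finite.exists_min fun a => toLex (dist z (y a), a)
  have hle : ∀ b, dist z (y a) ≤ dist z (y b) := fun b => by
    rcases Prod.Lex.toLex_le_toLex.1 (ha b) with h | h
    exacts [h.le, h.1.le]
  refine mem_iUnion.2 ⟨a, (hle b).trans_lt hz, hle, fun b hb => ?_⟩
  rcases Prod.Lex.toLex_le_toLex.1 (ha b) with h | h
  exacts [h, absurd hb h.2.not_gt]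

theorem measureReal_iUnion_ball_eq_sum_voronoiCell [MeasurableSpace X] [OpensMeasurableSpace X]
    [ProperSpace X] [Fintype ι] (ν : Measure X) [IsFiniteMeasureOnCompacts ν] (r : ℝ) :
    ν.real (⋃ a, ball (y a) r) = ∑ a, ν.real (ball (y a) r ∩ voronoiCell y a) := by
  rw [← iUnion_ball_inter_voronoiCell, measureReal_iUnion_fintype]
  · exact fun a b hab =>
      (pairwise_disjoint_voronoiCell hab).mono inter_subset_right inter_subset_right
  · exact fun a => measurableSet_ball.inter (measurableSet_voronoiCell a)

end Voronoi

theorem measureReal_ball_pos [MeasurableSpace X] [ProperSpace X] (ν : Measure X)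
    [IsFiniteMeasureOnCompacts ν] [ν.IsOpenPosMeasure] (x : X) {r : ℝ} (hr : 0 < r) :
    0 < ν.real (ball x r) :=
  ENNReal.toReal_pos (measure_ball_pos _ _ hr).ne' measure_ball_lt_top.ne

end Metric

section Normed

variable {E : Type*} [NormedAddCommGroup E] [NormedSpace ℝ E]

theorem dist_le_sub_of_ball_subset_ball {x y : E} {a r : ℝ} (ha : 0 < a) (har : a ≤ r)
    (h : ball y a ⊆ ball x r) : dist x y ≤ r - a := by
  rcases eq_or_ne x y with rfl | hxy
  · simpa using har
  have hD : 0 < dist x y := dist_pos.2 hxy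
  have hclosed : closedBall y a ⊆ closedBall x r := by
    rw [← closure_ball y ha.ne', ← closure_ball x (ha.trans_le har).ne']
    exact closure_mono h
  set z := AffineMap.lineMap x y (1 + a / dist x y)
  have hzy : dist z y = a := by
    rw [dist_lineMap_right, sub_add_cancel_left, norm_neg, Real.norm_of_nonneg (by positivity),
      div_mul_cancel₀ _ hD.ne']
  have hzx : dist z x = dist x y + a := by
    rw [dist_lineMap_left, Real.norm_of_nonneg (by positivity)]
    field_simp
  linarith [mem_closedBall.1 (hclosed (mem_closedBall.2 hzy.le))]

theorem homothety_mem_voronoiCell {ι : Type*} [LinearOrder ι] {y : ι → E} {a : ι} {z : E}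
    (hz : z ∈ voronoiCell y a) {t : ℝ} (ht0 : 0 ≤ t) (ht1 : t ≤ 1) :
    AffineMap.homothety (y a) t z ∈ voronoiCell y a := by
  set w := AffineMap.homothety (y a) t z
  have hwy : dist w (y a) = t * dist z (y a) := by
    rw [dist_homothety_center, Real.norm_of_nonneg ht0, dist_comm]
  have hzw : dist z w = (1 - t) * dist z (y a) := by
    rw [dist_self_homothety, Real.norm_of_nonneg (sub_nonneg.2 ht1), dist_comm]
  have hstep : ∀ b, dist z (y b) ≤ dist z w + dist w (y b) := fun b => dist_triangle _ _ _
  exact ⟨fun b => by linarith [hz.1 b, hstep b], fun b hb => by linarith [hz.2 b hb, hstep b]⟩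

theorem one_add_pow_sub_one_le (d : ℕ) {u : ℝ} (h0 : 0 ≤ u) (h1 : u ≤ 1) :
    (1 + u) ^ d - 1 ≤ 2 ^ d * u := by
  have h := (convexOn_pow d).2 (mem_Ici.2 zero_le_one) (mem_Ici.2 zero_le_two) (sub_nonneg.2 h1) h0
    (sub_add_cancel 1 u)
  simp only [smul_eq_mul, one_pow, mul_one] at h
  rw [show 1 - u + u * 2 = 1 + u by ring] at h
  linarith

variable [FiniteDimensional ℝ E] [MeasurableSpace E] [BorelSpace E]
  (ν : Measure E) [ν.IsAddHaarMeasure]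

theorem addHaar_real_ball_mul_of_pos (x : E) {r : ℝ} (hr : 0 < r) (t : ℝ) :
    ν.real (ball x (r * t)) = r ^ finrank ℝ E * ν.real (ball 0 t) := by
  rw [Measure.real, Measure.addHaar_ball_mul_of_pos _ _ hr, ENNReal.toReal_mul,
    ENNReal.toReal_ofReal (by positivity), Measure.real]

theorem addHaar_real_ball_inter_voronoiCell_le {ι : Type*} [LinearOrder ι] (y : ι → E) (a : ι)
    {t u : ℝ} (ht : 0 < t) (htu : t ≤ u) :
    ν.real (ball (y a) u ∩ voronoiCell y a) ≤
      (u / t) ^ finrank ℝ E * ν.real (ball (y a) t ∩ voronoiCell y a) := by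
  have hu : 0 < u := ht.trans_le htu
  have hsub : ball (y a) u ∩ voronoiCell y a ⊆
      AffineMap.homothety (y a) (u / t) '' (ball (y a) t ∩ voronoiCell y a) := by
    rintro z ⟨hz, hza⟩
    refine ⟨AffineMap.homothety (y a) (t / u) z, ⟨?_, ?_⟩, ?_⟩
    · rw [mem_ball, dist_homothety_center, Real.norm_of_nonneg (by positivity), dist_comm,
        div_mul_eq_mul_div, div_lt_iff₀ hu]
      exact mul_lt_mul_of_pos_left hz ht
    · exact homothety_mem_voronoiCell hza (by positivity) ((div_le_one hu).2 htu)
    · rw [← AffineMap.homothety_mul_apply, div_mul_div_cancel₀ ht.ne', div_self hu.ne',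
        AffineMap.homothety_one, AffineMap.id_apply]
  have himage : ν.real (AffineMap.homothety (y a) (u / t) '' (ball (y a) t ∩ voronoiCell y a)) =
      (u / t) ^ finrank ℝ E * ν.real (ball (y a) t ∩ voronoiCell y a) := by
    rw [Measure.real, Measure.addHaar_image_homothety, ENNReal.toReal_mul,
      ENNReal.toReal_ofReal (abs_nonneg _), abs_of_nonneg (by positivity), Measure.real]
  refine (measureReal_mono hsub ?_).trans_eq himage
  rw [Measure.addHaar_image_homothety]
  exact ENNReal.mul_ne_top ENNReal.ofReal_ne_top
    (measure_mono inter_subset_left |>.trans_lt measure_ball_lt_top).ne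

-- Kneser's inequality: each Voronoi cell is star-shaped about its site, so inside it the larger
-- ball is covered by the homothetic image of the smaller one.
theorem addHaar_real_thickening_le {Y : Set E} (hY : Y.Finite) {t u : ℝ} (ht : 0 < t)
    (htu : t ≤ u) :
    ν.real (thickening u Y) ≤ (u / t) ^ finrank ℝ E * ν.real (thickening t Y) := by
  have := hY.fintype
  let _ : LinearOrder Y := IsWellOrder.linearOrder WellOrderingRel
  simp only [thickening_eq_biUnion_ball, biUnion_eq_iUnion]
  rw [measureReal_iUnion_ball_eq_sum_voronoiCell, measureReal_iUnion_ball_eq_sum_voronoiCell,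
    Finset.mul_sum]
  exact Finset.sum_le_sum fun a _ => addHaar_real_ball_inter_voronoiCell_le ν _ a ht htu

theorem addHaar_real_thickening_diff_le {Y : Set E} (hY : Y.Finite) {a r : ℝ} (ha : 0 < a)
    (har : 16 * a ≤ r) :
    ν.real (thickening (r / 2 + a) Y \ thickening (r / 2 - a) Y) ≤
      2 ^ finrank ℝ E * (8 * a / r) * (8 ^ finrank ℝ E * ν.real (thickening (r / 16) Y)) := by
  have hr : 0 < r := by linarith
  have hfinite (t : ℝ) : ν (thickening t Y) ≠ ⊤ := hY.isBounded.thickening.measure_lt_top.ne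
  have hratio : (r / 2 + a) / (r / 2 - a) ≤ 1 + 8 * a / r := by
    have hquad : 8 * a / r * a ≤ a := by
      rw [div_mul_eq_mul_div, div_le_iff₀ hr]
      nlinarith
    rw [div_le_iff₀ (by linarith)]
    have : (1 + 8 * a / r) * (r / 2 - a) = r / 2 + 3 * a - 8 * a / r * a := by field_simp; ring
    linarith
  have hfactor : ((r / 2 + a) / (r / 2 - a)) ^ finrank ℝ E - 1 ≤
      2 ^ finrank ℝ E * (8 * a / r) := by
    refine le_trans ?_ (one_add_pow_sub_one_le _ (by positivity) ((div_le_one hr).2 (by linarith)))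
    gcongr
    exact div_nonneg (by linarith) (by linarith)
  have hinner : ν.real (thickening (r / 2 - a) Y) ≤
      8 ^ finrank ℝ E * ν.real (thickening (r / 16) Y) := by
    refine (measureReal_mono (thickening_mono (by linarith : r / 2 - a ≤ r / 2) Y)
      (hfinite _)).trans ?_
    refine (addHaar_real_thickening_le ν hY (by positivity : 0 < r / 16) (by linarith)).trans_eq ?_
    rw [show r / 2 / (r / 16) = 8 by field_simp; norm_num]
  rw [measureReal_sdiff (thickening_mono (by linarith) Y) isOpen_thickening.measurableSet
    (hfinite _)]
  calc _ ≤ (((r / 2 + a) / (r / 2 - a)) ^ finrank ℝ E - 1) * ν.real (thickening (r / 2 - a) Y) := by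
        linarith [addHaar_real_thickening_le ν hY (by linarith : 0 < r / 2 - a)
          (by linarith : r / 2 - a ≤ r / 2 + a)]
    _ ≤ _ := by gcongr

theorem card_mul_addHaar_real_ball_le {s : ℝ} {S : Finset E}
    (hS : (S : Set E).Pairwise (s ≤ dist · ·)) {U : Set E} (hU : ν U ≠ ⊤)
    (hSU : ∀ z ∈ S, ball z (s / 2) ⊆ U) : S.card * ν.real (ball (0 : E) (s / 2)) ≤ ν.real U := by
  have hunion : ν.real (⋃ z ∈ S, ball z (s / 2)) = S.card * ν.real (ball (0 : E) (s / 2)) := by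
    rw [measureReal_biUnion_finset (pairwiseDisjoint_ball_of_pairwise_le_dist hS)
      fun _ _ => measurableSet_ball]
    simp [Measure.addHaar_real_ball_center]
  rw [← hunion]
  exact measureReal_mono (iUnion₂_subset hSU) hU

theorem card_le_of_pairwise_le_dist {E : Type*} [NormedAddCommGroup E] [NormedSpace ℝ E]
    [FiniteDimensional ℝ E] {s t : ℝ} {S : Finset E} (hS : (S : Set E).Pairwise (s ≤ dist · ·))
    (hs : 0 < s) (ht : 0 ≤ t) {x : E} (hSx : ∀ z ∈ S, dist z x ≤ t) :
    (S.card : ℝ) ≤ (2 * t / s + 1) ^ finrank ℝ E := by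
  borelize E
  let ν : Measure E := Measure.addHaar
  have h := card_mul_addHaar_real_ball_le ν hS (U := ball x (t + s / 2))
    measure_ball_lt_top.ne fun z hz => ball_subset_ball' (by linarith [hSx z hz])
  rw [show t + s / 2 = (2 * t / s + 1) * (s / 2) by field_simp,
    addHaar_real_ball_mul_of_pos ν x (by positivity)] at h
  exact le_of_mul_le_mul_right h (measureReal_ball_pos ν 0 (half_pos hs))

end Normed

theorem two_inv_pow_pos (n : ℕ) : 0 < (2⁻¹ : ℝ) ^ n := by positivity

theorem two_inv_pow_le_of_le {m n : ℕ} (h : m ≤ n) : (2⁻¹ : ℝ) ^ n ≤ 2⁻¹ ^ m :=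
  pow_le_pow_of_le_one (by norm_num) (by norm_num) h

theorem two_inv_pow_eq_mul {m n : ℕ} (h : m ≤ n) : (2⁻¹ : ℝ) ^ m = 2 ^ (n - m) * 2⁻¹ ^ n := by
  obtain ⟨k, rfl⟩ := Nat.exists_eq_add_of_le h
  rw [Nat.add_sub_cancel_left, pow_add, mul_left_comm, ← mul_pow]
  norm_num

theorem two_mul_two_inv_pow_le_of_lt {m n : ℕ} (h : m < n) : 2 * (2⁻¹ : ℝ) ^ n ≤ 2⁻¹ ^ m := by
  have := two_inv_pow_le_of_le h
  rw [pow_succ] at this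
  linarith

theorem mul_two_inv_pow_le_of_mem_Ico {m n i : ℕ} (hi : i ∈ Finset.Ico m (n - 6)) :
    128 * (2⁻¹ : ℝ) ^ n ≤ 2⁻¹ ^ i := by
  have := two_inv_pow_le_of_le (by grind : i + 7 ≤ n)
  rw [pow_add] at this
  linarith

section HoleBoundary

variable {X : Type*} [MetricSpace X] {H : ℕ → Set X} {m n : ℕ}

/-- The points lying deep inside a hole, for a system of holes consisting of the balls of radius
`2⁻ⁱ / 2` about the points of `H i`, for the scales `i` from `m` almost to `n`. Depth is measured
in multiples of the resolution `2⁻ⁿ`. -/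
def deepHoles (H : ℕ → Set X) (m n : ℕ) : Set X :=
  {x | ∃ i ∈ Finset.Ico m (n - 6), ∃ y ∈ H i, dist x y < 2⁻¹ ^ i / 2 - 6 * 2⁻¹ ^ n}

/-- The points that are deep inside no hole but lie, at resolution `2⁻ⁿ`, on the boundary of a hole
of scale `i`. -/
def holeBoundary (H : ℕ → Set X) (m n i : ℕ) : Set X :=
  {x | x ∉ deepHoles H m n ∧ ∃ y ∈ H i, dist x y ≤ 2⁻¹ ^ i / 2 + 6 * 2⁻¹ ^ n}

theorem le_dist_of_notMem_deepHoles {x : X} (hx : x ∉ deepHoles H m n) {i : ℕ}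
    (hi : i ∈ Finset.Ico m (n - 6)) {y : X} (hy : y ∈ H i) :
    2⁻¹ ^ i / 2 - 6 * 2⁻¹ ^ n ≤ dist x y :=
  not_lt.1 fun h => hx ⟨i, hi, y, hy, h⟩

-- A much smaller hole near the boundary of which there is a point outside the large hole has to
-- stay away from the centre of the large one.
theorem add_le_dist_of_lt {i j : ℕ} (hi : i ∈ Finset.Ico m (n - 6)) (hij : i < j) {x y z : X}
    (hx : x ∉ deepHoles H m n) (hy : y ∈ H i) (hz : dist x z ≤ 2⁻¹ ^ j / 2 + 6 * 2⁻¹ ^ n) :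
    2⁻¹ ^ i / 16 + 2⁻¹ ^ j / 16 ≤ dist y z := by
  have hn := mul_two_inv_pow_le_of_mem_Ico hi
  have hj := two_mul_two_inv_pow_le_of_lt hij
  have hxy := le_dist_of_notMem_deepHoles hx hi hy
  have := dist_triangle_right x y z
  have := two_inv_pow_pos i
  linarith

end HoleBoundary

theorem sum_measureReal_thickening_le {X ι : Type*} [MetricSpace X] [ProperSpace X]
    [MeasurableSpace X] [OpensMeasurableSpace X] [LinearOrder ι] (ν : Measure X)
    [IsFiniteMeasureOnCompacts ν] {t : ι → ℝ} {Y : ι → Set X} {I : Finset ι} {x₀ : X} {R : ℝ}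
    (hYR : ∀ i ∈ I, ∀ y ∈ Y i, t i + dist y x₀ ≤ R)
    (hY : ∀ i ∈ I, ∀ j ∈ I, i < j → ∀ y ∈ Y i, ∀ z ∈ Y j, t i + t j ≤ dist y z) :
    ∑ i ∈ I, ν.real (thickening (t i) (Y i)) ≤ ν.real (ball x₀ R) := by
  have hsub : ∀ i ∈ I, thickening (t i) (Y i) ⊆ ball x₀ R := fun i hi => by
    rw [thickening_eq_biUnion_ball]
    exact iUnion₂_subset fun y hy => ball_subset_ball' (hYR i hi y hy)
  have hlt : ∀ i ∈ I, ∀ j ∈ I, i < j →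
      Disjoint (thickening (t i) (Y i)) (thickening (t j) (Y j)) := fun i hi j hj hij => by
    simp only [thickening_eq_biUnion_ball, disjoint_iUnion_left, disjoint_iUnion_right]
    exact fun z hz y hy => ball_disjoint_ball (hY i hi j hj hij y hy z hz)
  rw [← measureReal_biUnion_finset _ (fun _ _ => isOpen_thickening.measurableSet)
    fun i hi => (measure_mono (hsub i hi) |>.trans_lt measure_ball_lt_top).ne]
  · exact measureReal_mono (iUnion₂_subset hsub) measure_ball_lt_top.ne
  · exact fun i hi j hj hij => hij.lt_or_gt.elim (hlt i hi j hj) fun h => (hlt j hj i hi h).symm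

section HoleBoundaryCount

variable {E : Type*} [NormedAddCommGroup E] [NormedSpace ℝ E] [FiniteDimensional ℝ E]

theorem div_mul_card_mul_addHaar_real_ball_le_of_near_sphere [MeasurableSpace E] [BorelSpace E]
    (ν : Measure E) [ν.IsAddHaarMeasure] {s r : ℝ} (hs : 0 < s) (hsr : 128 * s ≤ r) {Y : Set E}
    (hY : Y.Finite) {S : Finset E} (hS : (S : Set E).Pairwise (s ≤ dist · ·))
    (hSY : ∀ z ∈ S, ∃ x, dist x z ≤ s ∧ (∀ y ∈ Y, r / 2 - 6 * s ≤ dist x y) ∧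
      ∃ y ∈ Y, dist x y ≤ r / 2 + 6 * s) :
    r / s * (S.card * ν.real (ball (0 : E) (s / 2))) ≤
      64 * 16 ^ finrank ℝ E * ν.real (thickening (r / 16) Y) := by
  have hr : 0 < r := by linarith
  suffices h : S.card * ν.real (ball (0 : E) (s / 2)) ≤
      ν.real (thickening (r / 2 + 8 * s) Y \ thickening (r / 2 - 8 * s) Y) by
    refine (mul_le_mul_of_nonneg_left (h.trans (addHaar_real_thickening_diff_le ν hY
      (by positivity) (by linarith))) (by positivity)).trans_eq ?_
    rw [show (16 : ℝ) = 2 * 8 by norm_num, mul_pow]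
    field_simp
    ring
  refine card_mul_addHaar_real_ball_le ν hS ?_ fun z hz u hu => ?_
  · exact (measure_mono sdiff_subset |>.trans_lt hY.isBounded.thickening.measure_lt_top).ne
  obtain ⟨x, hxz, hfar, y, hy, hxy⟩ := hSY z hz
  have hux : dist u x < 3 / 2 * s := by
    linarith [dist_triangle_right u x z, mem_ball.1 hu]
  refine ⟨mem_thickening_iff.2 ⟨y, hy, by linarith [dist_triangle u x y]⟩, fun hin => ?_⟩
  obtain ⟨w, hw, huw⟩ := mem_thickening_iff.1 hin
  linarith [hfar w hw, dist_triangle_left x w u]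

-- `2 ^ (n - i)` is the ratio of the scale `i` to the resolution `n`: the boundary layer of
-- thickness `2⁻ⁿ` of a union of holes of scale `i` is smaller than this union by such a factor.
theorem sum_two_pow_mul_card_le_of_near_holeBoundary {H : ℕ → Set E} {m n : ℕ} (hmn : m ≤ n)
    {x₀ : E} {S : ℕ → Finset E} (hS : ∀ i, (S i : Set E).Pairwise (2⁻¹ ^ n ≤ dist · ·))
    (hSH : ∀ i ∈ Finset.Ico m (n - 6), ∀ z ∈ S i,
      ∃ x ∈ holeBoundary H m n i, dist x x₀ ≤ 2⁻¹ ^ m ∧ dist x z ≤ 2⁻¹ ^ n) :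
    ∑ i ∈ Finset.Ico m (n - 6), (2 : ℝ) ^ (n - i) * (S i).card ≤
      64 * 16 ^ finrank ℝ E * (4 * 2 ^ (n - m)) ^ finrank ℝ E := by
  borelize E
  let ν : Measure E := Measure.addHaar
  choose! x hxH hxx₀ hxz using hSH
  choose! y hyH hxy using fun i hi z hz => (hxH i hi z hz).2
  let Y (i : ℕ) : Set E := y i '' S i
  have hcount : ∀ i ∈ Finset.Ico m (n - 6), 2 ^ (n - i) * ((S i).card *
      ν.real (ball (0 : E) (2⁻¹ ^ n / 2))) ≤
        64 * 16 ^ finrank ℝ E * ν.real (thickening (2⁻¹ ^ i / 16) (Y i)) := fun i hi => by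
    have hratio : (2 : ℝ) ^ (n - i) = 2⁻¹ ^ i / 2⁻¹ ^ n := by
      rw [two_inv_pow_eq_mul (by grind : i ≤ n), mul_div_cancel_right₀ _ (two_inv_pow_pos n).ne']
    rw [hratio]
    exact div_mul_card_mul_addHaar_real_ball_le_of_near_sphere ν (two_inv_pow_pos n)
      (mul_two_inv_pow_le_of_mem_Ico hi) ((S i).finite_toSet.image (y i)) (hS i) fun z hz =>
        ⟨x i z, hxz i hi z hz, forall_mem_image.2 fun w hw =>
          le_dist_of_notMem_deepHoles (hxH i hi z hz).1 hi (hyH i hi w hw),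
          y i z, mem_image_of_mem _ hz, hxy i hi z hz⟩
  have hvolume : ∑ i ∈ Finset.Ico m (n - 6), ν.real (thickening (2⁻¹ ^ i / 16) (Y i)) ≤
      ν.real (ball x₀ (2 * 2⁻¹ ^ m)) := by
    refine sum_measureReal_thickening_le ν ?_ ?_
    · refine fun i hi => forall_mem_image.2 fun z hz => ?_
      have := dist_triangle_left (y i z) x₀ (x i z)
      linarith [hxy i hi z hz, hxx₀ i hi z hz, mul_two_inv_pow_le_of_mem_Ico hi,
        two_inv_pow_le_of_le (Finset.mem_Ico.1 hi).1, two_inv_pow_pos m]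
    · exact fun i hi j hj hij => forall_mem_image.2 fun w hw => forall_mem_image.2 fun z hz =>
        add_le_dist_of_lt hi hij (hxH j hj z hz).1 (hyH i hi w hw) (hxy j hj z hz)
  rw [show 2 * (2⁻¹ : ℝ) ^ m = 4 * 2 ^ (n - m) * (2⁻¹ ^ n / 2) by
      rw [two_inv_pow_eq_mul hmn]; ring, addHaar_real_ball_mul_of_pos ν x₀ (by positivity)]
    at hvolume
  refine le_of_mul_le_mul_right ?_ (measureReal_ball_pos ν 0 (half_pos (two_inv_pow_pos n)))
  calc _ = ∑ i ∈ Finset.Ico m (n - 6), 2 ^ (n - i) * ((S i).card *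
        ν.real (ball (0 : E) (2⁻¹ ^ n / 2))) := by simp only [Finset.sum_mul, mul_assoc]
    _ ≤ 64 * 16 ^ finrank ℝ E *
        ∑ i ∈ Finset.Ico m (n - 6), ν.real (thickening (2⁻¹ ^ i / 16) (Y i)) := by
      rw [Finset.mul_sum]
      exact Finset.sum_le_sum hcount
    _ ≤ _ := (mul_le_mul_of_nonneg_left hvolume (by positivity)).trans_eq (mul_assoc _ _ _).symm

end HoleBoundaryCount

section BoundaryGain

open scoped ENNReal

section Metric

variable {X : Type*} [MetricSpace X] {H : ℕ → Set X} {m n : ℕ} {x : X}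

/-- The gain of a point over the block of levels from `m` to `n`: the number of levels from the
coarsest scale at which the point lies on the boundary of a hole down to the resolution `n`. -/
noncomputable def boundaryGain (H : ℕ → Set X) (m n : ℕ) (x : X) : ℕ :=
  {i ∈ Finset.Ico m (n - 6) | x ∈ holeBoundary H m n i}.sup (n - ·)

theorem boundaryGain_eq_zero_or_exists_mem_holeBoundary (H : ℕ → Set X) (m n : ℕ) (x : X) :
    boundaryGain H m n x = 0 ∨
      ∃ i ∈ Finset.Ico m (n - 6), x ∈ holeBoundary H m n i ∧ boundaryGain H m n x = n - i := by
  rcases Finset.eq_empty_or_nonempty {i ∈ Finset.Ico m (n - 6) | x ∈ holeBoundary H m n i}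
    with hempty | hne
  · exact Or.inl (by rw [boundaryGain, hempty, Finset.sup_empty, bot_eq_zero])
  · obtain ⟨i, hi, heq⟩ := Finset.exists_mem_eq_sup _ hne (n - ·)
    rw [Finset.mem_filter] at hi
    exact Or.inr ⟨i, hi.1, hi.2, heq⟩

theorem card_filter_mem_le_boundaryGain_add (hx : x ∉ deepHoles H m n) {P : Set ℕ}
    (hP : ∀ i ∈ Finset.Ico m (n - 6), i ∈ P → ∃ y ∈ H i, dist x y ≤ 2⁻¹ ^ i / 2 + 6 * 2⁻¹ ^ n) :
    {i ∈ Finset.Ico m n | i ∈ P}.card ≤ boundaryGain H m n x + 6 := by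
  have hsub : {i ∈ Finset.Ico m n | i ∈ P} ⊆
      Finset.Ico (n - (boundaryGain H m n x + 6)) n := fun i hi => by
    rw [Finset.mem_filter, Finset.mem_Ico] at hi
    rw [Finset.mem_Ico]
    by_cases hin : i < n - 6
    · have hi' : i ∈ Finset.Ico m (n - 6) := Finset.mem_Ico.2 ⟨hi.1.1, hin⟩
      have hgain : n - i ≤ boundaryGain H m n x :=
        Finset.le_sup (f := (n - ·)) (Finset.mem_filter.2 ⟨hi', hx, hP i hi' hi.2⟩)
      omega
    · omega
  refine (Finset.card_le_card hsub).trans ?_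
  rw [Nat.card_Ico]
  omega

theorem iSup_two_pow_boundaryGain_le {ι κ : Type*} (π₀ : X → ι) (π₁ : X → κ) (z₀ : ι) (z : κ) :
    ⨆ (x : X) (_ : π₀ x = z₀) (_ : π₁ x = z), (2 : ℝ≥0∞) ^ boundaryGain H m n x ≤
      (if ∃ x, π₀ x = z₀ ∧ π₁ x = z then 1 else 0) + ∑ i ∈ Finset.Ico m (n - 6), 2 ^ (n - i) *
        if ∃ x, π₀ x = z₀ ∧ π₁ x = z ∧ x ∈ holeBoundary H m n i then 1 else 0 := by
  refine iSup_le fun x => iSup₂_le fun hx₀ hx₁ => ?_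
  rcases boundaryGain_eq_zero_or_exists_mem_holeBoundary H m n x with hzero | ⟨i, hi, hxi, hgain⟩
  · rw [hzero, pow_zero, if_pos ⟨x, hx₀, hx₁⟩]
    exact le_self_add
  · refine le_add_of_nonneg_of_le zero_le (le_trans ?_
      (Finset.single_le_sum (fun _ _ => zero_le) hi))
    rw [if_pos ⟨x, hx₀, hx₁, hxi⟩, hgain, mul_one]

end Metric

variable {E : Type*} [NormedAddCommGroup E] [NormedSpace ℝ E] [FiniteDimensional ℝ E]

variable {H : ℕ → Set E} {m n : ℕ} {π₀ π₁ : E → E}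

theorem card_add_sum_two_pow_mul_card_le (hmn : m ≤ n) (h₀ : IsNetProjection (2⁻¹ ^ m) π₀)
    (h₁ : IsNetProjection (2⁻¹ ^ n) π₁) (z₀ : E) (F : Finset E) :
    {z ∈ F | ∃ x, π₀ x = z₀ ∧ π₁ x = z}.card + ∑ i ∈ Finset.Ico m (n - 6), 2 ^ (n - i) *
      {z ∈ F | ∃ x, π₀ x = z₀ ∧ π₁ x = z ∧ x ∈ holeBoundary H m n i}.card ≤
        2 ^ (7 + 6 * finrank ℝ E + finrank ℝ E * (n - m)) := by
  have hsep {S : Finset E} (hS : ∀ z ∈ S, ∃ x, π₁ x = z) :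
      (S : Set E).Pairwise (2⁻¹ ^ n ≤ dist · ·) := h₁.pairwise_le_dist.mono hS
  have hcells := card_le_of_pairwise_le_dist (t := 2 * 2⁻¹ ^ m) (x := z₀)
    (hsep (S := {z ∈ F | ∃ x, π₀ x = z₀ ∧ π₁ x = z}) (by grind)) (two_inv_pow_pos n)
    (by positivity) fun z hz => by
      obtain ⟨x, rfl, rfl⟩ := (Finset.mem_filter.1 hz).2
      linarith [h₀.dist_le x, h₁.dist_le x, dist_triangle_left (π₁ x) (π₀ x) x,
        two_inv_pow_le_of_le hmn]
  have hboundary := sum_two_pow_mul_card_le_of_near_holeBoundary (H := H) hmn (x₀ := z₀)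
    (S := fun i => {z ∈ F | ∃ x, π₀ x = z₀ ∧ π₁ x = z ∧ x ∈ holeBoundary H m n i})
    (fun i => hsep (by grind)) fun i _ z hz => by
      obtain ⟨x, rfl, rfl, hx⟩ := (Finset.mem_filter.1 hz).2
      exact ⟨x, hx, h₀.dist_le x, h₁.dist_le x⟩
  have hratio : 2 * (2 * 2⁻¹ ^ m) / 2⁻¹ ^ n + 1 ≤ (64 * 2 ^ (n - m) : ℝ) := by
    rw [two_inv_pow_eq_mul hmn]
    field_simp
    linarith [one_le_pow₀ one_le_two (M₀ := ℝ) (n := n - m)]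
  have htotal : (2 : ℝ) ^ (7 + 6 * finrank ℝ E + finrank ℝ E * (n - m)) =
      64 * (64 * 2 ^ (n - m)) ^ finrank ℝ E + 64 * (64 * 2 ^ (n - m)) ^ finrank ℝ E := by
    rw [pow_add, pow_add, pow_mul, mul_comm (finrank ℝ E), pow_mul, mul_pow]
    ring
  have hpos : (0 : ℝ) ≤ (64 * 2 ^ (n - m)) ^ finrank ℝ E := by positivity
  rw [mul_assoc, ← mul_pow, ← mul_assoc] at hboundary
  norm_num only at hboundary
  have hcells' := (hcells.trans (pow_le_pow_left₀ (by positivity) hratio _)).trans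
    (le_mul_of_one_le_left hpos (by norm_num : (1 : ℝ) ≤ 64))
  have hsum := (add_le_add hcells' hboundary).trans_eq htotal.symm
  exact_mod_cast hsum

theorem tsum_iSup_two_pow_boundaryGain_le (hmn : m ≤ n) (h₀ : IsNetProjection (2⁻¹ ^ m) π₀)
    (h₁ : IsNetProjection (2⁻¹ ^ n) π₁) (z₀ : E) :
    ∑' z, ⨆ (x : E) (_ : π₀ x = z₀) (_ : π₁ x = z), (2 : ℝ≥0∞) ^ boundaryGain H m n x ≤
      2 ^ (7 + 6 * finrank ℝ E + finrank ℝ E * (n - m)) := by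
  refine ENNReal.tsum_eq_iSup_sum.trans_le (iSup_le fun F => ?_)
  refine (Finset.sum_le_sum fun z _ => iSup_two_pow_boundaryGain_le π₀ π₁ z₀ z).trans ?_
  simp only [Finset.sum_add_distrib, Finset.sum_comm (s := F), ← Finset.mul_sum, Finset.sum_boole]
  exact_mod_cast card_add_sum_two_pow_mul_card_le hmn h₀ h₁ z₀ F

end BoundaryGain

section TransitionWeight

open scoped ENNReal

variable {X ι : Type*}

/-- The supremum of the weight `c k` over the points that `q k` and `q (k + 1)` send to `a` and `b`:
the weight of the edge from `a` to `b` in the tree of successive fibres of the `q k`. -/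
noncomputable def transitionWeight (q : ℕ → X → ι) (c : ℕ → X → ℝ≥0∞) (k : ℕ) (a b : ι) : ℝ≥0∞ :=
  ⨆ (x : X) (_ : q k x = a) (_ : q (k + 1) x = b), c k x

/-- The total weight of the paths from `a₀` to a given vertex of generation `k` in the tree with
edge weights `transitionWeight`. -/
noncomputable def pathWeight (q : ℕ → X → ι) (c : ℕ → X → ℝ≥0∞) (a₀ : ι) : ℕ → ι → ℝ≥0∞
  | 0 => Pi.single a₀ 1
  | k + 1 => fun b => ∑' a, pathWeight q c a₀ k a * transitionWeight q c k a b

variable {q : ℕ → X → ι} {c : ℕ → X → ℝ≥0∞} {M : ℝ≥0∞}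

theorem tsum_pathWeight_le (hM : ∀ k a, ∑' b, transitionWeight q c k a b ≤ M) (a₀ : ι) (k : ℕ) :
    ∑' b, pathWeight q c a₀ k b ≤ M ^ k := by
  induction k with
  | zero => simp [pathWeight]
  | succ k ih =>
    calc ∑' b, ∑' a, pathWeight q c a₀ k a * transitionWeight q c k a b
        = ∑' a, pathWeight q c a₀ k a * ∑' b, transitionWeight q c k a b := by
          rw [ENNReal.tsum_comm]
          simp only [ENNReal.tsum_mul_left]
      _ ≤ (∑' a, pathWeight q c a₀ k a) * M := by
          rw [← ENNReal.tsum_mul_right]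
          gcongr with a
          exact hM k a
      _ ≤ M ^ (k + 1) := by
          rw [pow_succ]
          gcongr

theorem prod_le_pathWeight (x : X) (k : ℕ) :
    ∏ j ∈ Finset.range k, c j x ≤ pathWeight q c (q 0 x) k (q k x) := by
  induction k with
  | zero => simp [pathWeight]
  | succ k ih =>
    have hedge : c k x ≤ transitionWeight q c k (q k x) (q (k + 1) x) :=
      le_iSup_of_le x (le_iSup₂_of_le rfl rfl le_rfl)
    rw [Finset.prod_range_succ]
    exact (mul_le_mul' ih hedge).trans
      (ENNReal.le_tsum (f := fun a => _ * transitionWeight q c k a (q (k + 1) x)) (q k x))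

variable [MeasurableSpace X] {μ : Measure X}

theorem ae_eventually_le_mul_measure_fiber (hq : ∀ k, (range (q k)).Countable) (hM₀ : M ≠ 0)
    (hM : M ≠ ∞) {W : ℕ → ι → ℝ≥0∞} (hW : ∀ k, ∑' b, W k b ≤ M ^ k) :
    ∀ᵐ x ∂μ, ∀ᶠ k in atTop, W k (q k x) ≤ (2 * M) ^ k * μ {z | q k z = q k x} := by
  let heavy (k : ℕ) : Set ι := {b ∈ range (q k) | (2 * M) ^ k * μ {z | q k z = b} < W k b}
  have hheavy (k : ℕ) : μ (⋃ b ∈ heavy k, {z | q k z = b}) ≤ 2⁻¹ ^ k :=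
    calc μ (⋃ b ∈ heavy k, {z | q k z = b})
        ≤ ∑' b : heavy k, μ {z | q k z = b} :=
          measure_biUnion_le μ ((hq k).mono (sep_subset _ _)) _
      _ ≤ ∑' b : heavy k, W k b / (2 * M) ^ k := by
          gcongr with b
          rw [ENNReal.le_div_iff_mul_le (by simp [hM₀]) (by simp [hM, ENNReal.mul_eq_top]),
            mul_comm]
          exact b.2.2.le
      _ ≤ M ^ k / (2 * M) ^ k := by
          simp only [div_eq_mul_inv, ENNReal.tsum_mul_right]
          gcongr
          exact (ENNReal.tsum_comp_le_tsum_of_injective Subtype.val_injective _).trans (hW k)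
      _ = 2⁻¹ ^ k := by
          simpa [mul_pow, ENNReal.inv_pow] using
            ENNReal.mul_div_mul_right 1 (2 ^ k) (pow_ne_zero k hM₀) (ENNReal.pow_ne_top hM)
  have hsum : ∑' k, μ (⋃ b ∈ heavy k, {z | q k z = b}) ≠ ∞ :=
    ((ENNReal.tsum_le_tsum hheavy).trans_lt (by simp [ENNReal.tsum_geometric])).ne
  filter_upwards [ae_eventually_notMem hsum] with x hx
  filter_upwards [hx] with k hk
  by_contra! hlt
  exact hk (mem_iUnion₂.2 ⟨q k x, ⟨mem_range_self x, hlt⟩, rfl⟩)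

-- The weights make the tree of fibres a Markov chain of growth at most `M`, started at the fibre of
-- `q 0`; hence only few fibres of generation `k` can have measure much below their path weight.
theorem ae_eventually_prod_le_mul_measure_fiber (hq : ∀ k, (range (q k)).Countable) (hM₀ : M ≠ 0)
    (hM : M ≠ ∞) (hc : ∀ k a, ∑' b, transitionWeight q c k a b ≤ M) :
    ∀ᵐ x ∂μ, ∀ᶠ k in atTop,
      ∏ j ∈ Finset.range k, c j x ≤ (2 * M) ^ k * μ {z | q k z = q k x} := by
  have hae := (ae_ball_iff (hq 0)).2 fun a₀ _ =>
    ae_eventually_le_mul_measure_fiber (μ := μ) hq hM₀ hM (tsum_pathWeight_le hc a₀)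
  filter_upwards [hae] with x hx
  filter_upwards [hx (q 0 x) (mem_range_self x)] with k hk
  exact (prod_le_pathWeight x k).trans hk

end TransitionWeight

section Overlap

variable {E : Type*} [NormedAddCommGroup E] [NormedSpace ℝ E] [FiniteDimensional ℝ E]
  [MeasurableSpace E] [BorelSpace E] (μ : Measure E)

theorem sum_measure_ball_le {s t : ℝ} (hs : 0 < s) (ht : 0 ≤ t) {N : Finset E}
    (hN : (N : Set E).Pairwise (s ≤ dist · ·)) {T : Set E} (hT : ∀ y ∈ N, ball y t ⊆ T) :
    ∑ y ∈ N, μ (ball y t) ≤ ENNReal.ofReal ((2 * t / s + 1) ^ finrank ℝ E) * μ T := by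
  have hoverlap (x : E) : ∑ y ∈ N, (ball y t).indicator (1 : E → ENNReal) x ≤
      ENNReal.ofReal ((2 * t / s + 1) ^ finrank ℝ E) := by
    have hcard := card_le_of_pairwise_le_dist (S := {y ∈ N | x ∈ ball y t})
      (hN.mono (Finset.coe_subset.2 (Finset.filter_subset _ _))) hs ht
      fun y hy => (mem_ball'.1 (Finset.mem_filter.1 hy).2).le
    simp only [indicator_apply, Pi.one_apply, Finset.sum_boole]
    rw [← ENNReal.ofReal_natCast]
    exact ENNReal.ofReal_le_ofReal hcard
  calc ∑ y ∈ N, μ (ball y t) = ∑ y ∈ N, μ.restrict T (ball y t) :=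
        Finset.sum_congr rfl fun y hy => by
          rw [Measure.restrict_apply measurableSet_ball, inter_eq_left.2 (hT y hy)]
    _ = ∫⁻ x in T, ∑ y ∈ N, (ball y t).indicator 1 x ∂μ := by
        rw [lintegral_finsetSum _ fun _ _ => measurable_one.indicator measurableSet_ball]
        simp only [lintegral_indicator_one measurableSet_ball]
    _ ≤ ∫⁻ _ in T, ENNReal.ofReal ((2 * t / s + 1) ^ finrank ℝ E) ∂μ := lintegral_mono hoverlap
    _ = _ := setLIntegral_const _ _

theorem tsum_measure_ball_le {s t : ℝ} (hs : 0 < s) (ht : 0 ≤ t) {N : Set E}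
    (hN : N.Pairwise (s ≤ dist · ·)) {T : Set E} (hT : ∀ y ∈ N, ball y t ⊆ T) :
    ∑' y : N, μ (ball (y : E) t) ≤ ENNReal.ofReal ((2 * t / s + 1) ^ finrank ℝ E) * μ T := by
  refine ENNReal.tsum_eq_iSup_sum.trans_le (iSup_le fun F => ?_)
  have hF : (F.map (Function.Embedding.subtype (· ∈ N)) : Set E) ⊆ N := by simp
  simpa using sum_measure_ball_le μ hs ht (hN.mono hF) fun y hy => hT y (hF hy)

theorem tsum_measure_ball_three_mul_two_inv_pow_le {i n : ℕ} (hin : i ≤ n) {N : Set E}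
    (hN : N.Pairwise (2⁻¹ ^ n ≤ dist · ·)) {T : Set E} (hT : ∀ y ∈ N, ball y (3 * 2⁻¹ ^ i) ⊆ T) :
    ∑' y : N, μ (ball (y : E) (3 * 2⁻¹ ^ i)) ≤ (8 * 2 ^ (n - i)) ^ finrank ℝ E * μ T := by
  have hs := two_inv_pow_pos n
  have hratio : 2 * (3 * 2⁻¹ ^ i) / 2⁻¹ ^ n + 1 ≤ (8 * 2 ^ (n - i) : ℝ) := by
    rw [two_inv_pow_eq_mul hin]
    field_simp
    linarith [one_le_pow₀ one_le_two (M₀ := ℝ) (n := n - i)]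
  refine (tsum_measure_ball_le μ hs (by positivity) hN hT).trans ?_
  rw [ENNReal.ofReal_pow (by positivity)]
  gcongr
  simpa [ENNReal.ofReal_mul, ENNReal.ofReal_pow] using ENNReal.ofReal_le_ofReal hratio

end Overlap

section HollowCenters

variable {X : Type*} [MetricSpace X] [MeasurableSpace X]

/-- The indices `i` of the scales `2⁻ⁱ` at which `μ` has, near `x`, an `ε`-hole of relative size
larger than `α`. -/
def porousScales (μ : Measure X) (α ε : ℝ) (x : X) : Set ℕ :=
  {i | α < porMeas μ x (2⁻¹ ^ i) ε}

/-- The net points `y` such that the ball about `y` with radius about `2⁻ⁱ / 2` is an `ε`-hole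
relative to the ball about `y` with radius `3 * 2⁻ⁱ`. -/
def hollowCenters (μ : Measure X) (π : X → X) (ε : ℝ) (n i : ℕ) : Set X :=
  {y ∈ range π | μ (ball y (2⁻¹ ^ i / 2 - 2 * 2⁻¹ ^ n)) ≤
    ENNReal.ofReal ε * μ (ball y (3 * 2⁻¹ ^ i))}

end HollowCenters

section DeepHoles

open scoped ENNReal

variable {E : Type*} [NormedAddCommGroup E] [NormedSpace ℝ E] [MeasurableSpace E]
  {μ : Measure E} {α ε : ℝ}

theorem exists_measure_ball_le_of_lt_porMeas (hα₀ : 0 < α) (hα₁ : α ≤ 1) {x : E} {r : ℝ}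
    (hr : 0 < r) (h : α < porMeas μ x r ε) :
    ∃ y, dist x y ≤ (1 - α) * r ∧ μ (ball y (α * r)) ≤ ENNReal.ofReal ε * μ (ball x r) := by
  obtain ⟨β, ⟨-, y, hyx, hy⟩, hαβ⟩ := exists_lt_of_lt_csSup (by exact ⟨0, le_rfl, x, by simp⟩) h
  have hsub : ball y (α * r) ⊆ ball y (β * r) := ball_subset_ball (by gcongr)
  refine ⟨y, ?_, (measure_mono hsub).trans hy⟩
  rw [sub_mul, one_mul]
  exact dist_le_sub_of_ball_subset_ball (by positivity) (mul_le_of_le_one_left hr.le hα₁)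
    (hsub.trans hyx)

theorem exists_mem_hollowCenters_of_mem_porousScales {m n i : ℕ} {π : E → E}
    (hπ : IsNetProjection (2⁻¹ ^ n) π) (hα₀ : 0 < α) (hα₁ : α ≤ 1)
    (hα : 1 - 2 * α ≤ 2 * 2⁻¹ ^ (n - m)) (hi : i ∈ Finset.Ico m (n - 6)) {x : E}
    (hx : i ∈ porousScales μ α ε x) :
    ∃ y ∈ hollowCenters μ π ε n i, dist x y ≤ 2⁻¹ ^ i / 2 + 6 * 2⁻¹ ^ n := by
  have hr := two_inv_pow_pos i
  have hs := two_inv_pow_pos n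
  have hsr := mul_two_inv_pow_le_of_mem_Ico hi
  obtain ⟨y, hxy, hy⟩ := exists_measure_ball_le_of_lt_porMeas hα₀ hα₁ hr hx
  have hyπ := hπ.dist_le y
  have hsize : (1 - 2 * α) * 2⁻¹ ^ i ≤ 2 * 2⁻¹ ^ n :=
    calc (1 - 2 * α) * 2⁻¹ ^ i ≤ 2 * 2⁻¹ ^ (n - m) * 2⁻¹ ^ m :=
          mul_le_mul hα (two_inv_pow_le_of_le (by grind)) hr.le (by positivity)
      _ = 2 * 2⁻¹ ^ n := by rw [mul_assoc, ← pow_add, Nat.sub_add_cancel (by grind)]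
  have hxπ : dist x (π y) ≤ 2⁻¹ ^ i / 2 + 2 * 2⁻¹ ^ n := by
    linarith [dist_triangle x y (π y)]
  refine ⟨π y, ⟨mem_range_self y, ?_⟩, hxπ.trans (by linarith)⟩
  calc μ (ball (π y) (2⁻¹ ^ i / 2 - 2 * 2⁻¹ ^ n)) ≤ μ (ball y (α * 2⁻¹ ^ i)) :=
        measure_mono (ball_subset_ball' (by rw [dist_comm]; linarith))
    _ ≤ ENNReal.ofReal ε * μ (ball x (2⁻¹ ^ i)) := hy
    _ ≤ ENNReal.ofReal ε * μ (ball (π y) (3 * 2⁻¹ ^ i)) := by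
        gcongr
        exact ball_subset_ball' (by linarith)

variable [FiniteDimensional ℝ E] [BorelSpace E] {c : ℝ≥0∞} {G : Set E}

theorem measure_inter_biUnion_hollowCenters_le {m n i : ℕ} {π : E → E}
    (hπ : IsNetProjection (2⁻¹ ^ n) π) (hi : i ∈ Finset.Ico m (n - 6))
    (hG : ∀ A, μ (A ∩ G) ≤ c * μ (thickening (4 * 2⁻¹ ^ n) A)) (A : Set E) :
    μ (A ∩ ((⋃ y ∈ hollowCenters μ π ε n i, ball y (2⁻¹ ^ i / 2 - 6 * 2⁻¹ ^ n)) ∩ G)) ≤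
      (8 * 2 ^ (n - m)) ^ finrank ℝ E * ENNReal.ofReal ε * c *
        μ (thickening (4 * 2⁻¹ ^ m) A) := by
  have hr := two_inv_pow_pos i
  have hs := two_inv_pow_pos n
  have hmi := two_inv_pow_le_of_le (Finset.mem_Ico.1 hi).1
  let B (y : E) : Set E := A ∩ ball y (2⁻¹ ^ i / 2 - 6 * 2⁻¹ ^ n)
  let Y : Set E := {y ∈ hollowCenters μ π ε n i | (B y).Nonempty}
  have hY : Y.Pairwise (2⁻¹ ^ n ≤ dist · ·) := hπ.pairwise_le_dist.mono fun y hy => hy.1.1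
  have hcover : A ∩ ((⋃ y ∈ hollowCenters μ π ε n i, ball y (2⁻¹ ^ i / 2 - 6 * 2⁻¹ ^ n)) ∩ G) ⊆
      ⋃ y ∈ Y, B y ∩ G := by
    rintro x ⟨hxA, hx, hxG⟩
    obtain ⟨y, hy, hxy⟩ := mem_iUnion₂.1 hx
    exact mem_iUnion₂.2 ⟨y, ⟨hy, x, hxA, hxy⟩, ⟨hxA, hxy⟩, hxG⟩
  have hhole : ∀ y ∈ Y, μ (B y ∩ G) ≤ c * (ENNReal.ofReal ε * μ (ball y (3 * 2⁻¹ ^ i))) := by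
    refine fun y hy => (hG (B y)).trans ?_
    gcongr
    refine (measure_mono fun z hz => ?_).trans hy.1.2
    obtain ⟨x, hx, hzx⟩ := mem_thickening_iff.1 hz
    have := mem_ball.1 hx.2
    exact mem_ball.2 (by linarith [dist_triangle z x y])
  have hinside : ∀ y ∈ Y, ball y (3 * 2⁻¹ ^ i) ⊆ thickening (4 * 2⁻¹ ^ m) A := by
    rintro y ⟨-, x, hxA, hxy⟩ z hz
    have := mem_ball.1 hz
    have := mem_ball'.1 hxy
    exact mem_thickening_iff.2 ⟨x, hxA, by linarith [dist_triangle z y x]⟩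
  calc _ ≤ ∑' y : Y, μ (B y ∩ G) := (measure_mono hcover).trans
        (measure_biUnion_le μ (countable_of_pairwise_le_dist hs hY) _)
    _ ≤ c * (ENNReal.ofReal ε * ∑' y : Y, μ (ball (y : E) (3 * 2⁻¹ ^ i))) := by
        simp only [← ENNReal.tsum_mul_left]
        exact ENNReal.tsum_le_tsum fun y => hhole y y.2
    _ ≤ c * (ENNReal.ofReal ε *
          ((8 * 2 ^ (n - m)) ^ finrank ℝ E * μ (thickening (4 * 2⁻¹ ^ m) A))) := by
        gcongr
        refine (tsum_measure_ball_three_mul_two_inv_pow_le μ (by grind) hY hinside).trans ?_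
        gcongr
        · exact one_le_two
        · exact (Finset.mem_Ico.1 hi).1
    _ = _ := by ring

theorem measure_inter_deepHoles_inter_le {m n : ℕ} {π : E → E}
    (hπ : IsNetProjection (2⁻¹ ^ n) π)
    (hG : ∀ A, μ (A ∩ G) ≤ c * μ (thickening (4 * 2⁻¹ ^ n) A)) (A : Set E) :
    μ (A ∩ (deepHoles (hollowCenters μ π ε n) m n ∩ G)) ≤
      ((n - m : ℕ) * (8 * 2 ^ (n - m)) ^ finrank ℝ E * ENNReal.ofReal ε) * c *
        μ (thickening (4 * 2⁻¹ ^ m) A) := by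
  have hunion : A ∩ (deepHoles (hollowCenters μ π ε n) m n ∩ G) ⊆
      ⋃ i ∈ Finset.Ico m (n - 6), A ∩
        ((⋃ y ∈ hollowCenters μ π ε n i, ball y (2⁻¹ ^ i / 2 - 6 * 2⁻¹ ^ n)) ∩ G) := by
    rintro x ⟨hxA, ⟨i, hi, y, hy, hxy⟩, hxG⟩
    exact mem_iUnion₂.2 ⟨i, hi, hxA, mem_iUnion₂.2 ⟨y, hy, hxy⟩, hxG⟩
  refine (measure_mono hunion).trans ((measure_biUnion_finset_le _ _).trans ?_)
  refine (Finset.sum_le_card_nsmul _ _ _ fun i hi =>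
    measure_inter_biUnion_hollowCenters_le hπ hi hG A).trans ?_
  rw [nsmul_eq_mul, Nat.card_Ico, ← mul_assoc, ← mul_assoc, ← mul_assoc]
  gcongr
  omega

-- The holes of the finest block are treated first: the bound for the coarser blocks only sees a
-- neighbourhood whose size is that of the finer scales.
theorem measure_inter_biInter_deepHoles_le {L : ℕ} {π : ℕ → E → E}
    (hπ : ∀ k, IsNetProjection (2⁻¹ ^ (k * L)) (π k)) (F : Finset ℕ) {k₀ : ℕ}
    (hF : ∀ k ∈ F, k₀ ≤ k) (A : Set E) :
    μ (A ∩ ⋂ k ∈ F, deepHoles (hollowCenters μ (π (k + 1)) ε ((k + 1) * L)) (k * L)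
        ((k + 1) * L)) ≤
      (L * (8 * 2 ^ L) ^ finrank ℝ E * ENNReal.ofReal ε) ^ F.card *
        μ (thickening (4 * 2⁻¹ ^ (k₀ * L)) A) := by
  induction F using Finset.induction_on_min generalizing k₀ A with
  | empty =>
    simpa using measure_mono (self_subset_thickening (by positivity) A)
  | insert k F hk ih =>
    have hstep := measure_inter_deepHoles_inter_le (ε := ε) (m := k * L) (hπ (k + 1)) (ih hk) A
    rw [Nat.succ_mul, Nat.add_sub_cancel_left, ← Nat.succ_mul] at hstep
    rw [Finset.set_biInter_insert, Finset.card_insert_of_notMem fun h => (hk k h).false, pow_succ']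
    have hscale := two_inv_pow_le_of_le (Nat.mul_le_mul_right L (hF k (Finset.mem_insert_self k F)))
    refine hstep.trans (mul_le_mul' le_rfl (measure_mono (thickening_mono ?_ A)))
    gcongr

end DeepHoles

section Frequency

open scoped ENNReal

variable {X : Type*} [MeasurableSpace X] {μ : Measure X} {B : ℕ → Set X} {p : ℕ}

theorem measure_lt_mul_card_le {K : ℝ≥0∞}
    (hB : ∀ F : Finset ℕ, μ (⋂ b ∈ F, B b) ≤ (4⁻¹ ^ p) ^ F.card * K) (k : ℕ) :
    μ {x | k < p * {b ∈ Finset.range k | x ∈ B b}.card} ≤ 2⁻¹ ^ k * K := by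
  let large : Finset (Finset ℕ) := {F ∈ (Finset.range k).powerset | k < p * F.card}
  have hcover : {x | k < p * {b ∈ Finset.range k | x ∈ B b}.card} ⊆
      ⋃ F ∈ large, ⋂ b ∈ F, B b := fun x hx =>
    mem_iUnion₂.2 ⟨{b ∈ Finset.range k | x ∈ B b}, Finset.mem_filter.2
      ⟨Finset.mem_powerset.2 (Finset.filter_subset _ _), hx⟩,
      mem_iInter₂.2 fun b hb => (Finset.mem_filter.1 hb).2⟩
  have hterm : ∀ F ∈ large, μ (⋂ b ∈ F, B b) ≤ 4⁻¹ ^ k * K := fun F hF => by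
    refine (hB F).trans (mul_le_mul' ?_ le_rfl)
    rw [← pow_mul]
    exact pow_le_pow_right_of_le_one' (by simp) (Finset.mem_filter.1 hF).2.le
  have hcard : large.card ≤ 2 ^ k := by
    simpa using Finset.card_filter_le (Finset.range k).powerset (k < p * ·.card)
  calc _ ≤ ∑ F ∈ large, μ (⋂ b ∈ F, B b) :=
        (measure_mono hcover).trans (measure_biUnion_finset_le _ _)
    _ ≤ 2 ^ k * (4⁻¹ ^ k * K) := by
        refine (Finset.sum_le_card_nsmul _ _ _ hterm).trans ?_
        rw [nsmul_eq_mul]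
        gcongr
        exact_mod_cast hcard
    _ = 2⁻¹ ^ k * K := by
        have hhalf : (2 * 4⁻¹ : ℝ≥0∞) = 2⁻¹ := by
          rw [show (4 : ℝ≥0∞) = 2 * 2 by norm_num, ENNReal.mul_inv (by simp) (by simp),
            ← mul_assoc, ENNReal.mul_inv_cancel (by simp) (by simp), one_mul]
        rw [← mul_assoc, ← mul_pow, hhalf]

theorem ae_eventually_mul_card_le {K : ℝ≥0∞} (hK : K ≠ ∞)
    (hB : ∀ F : Finset ℕ, μ (⋂ b ∈ F, B b) ≤ (4⁻¹ ^ p) ^ F.card * K) :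
    ∀ᵐ x ∂μ, ∀ᶠ k in atTop, p * {b ∈ Finset.range k | x ∈ B b}.card ≤ k := by
  have hsum : ∑' k, μ {x | k < p * {b ∈ Finset.range k | x ∈ B b}.card} ≠ ∞ := by
    refine ((ENNReal.tsum_le_tsum (measure_lt_mul_card_le hB)).trans_lt ?_).ne
    rw [ENNReal.tsum_mul_right, ENNReal.tsum_geometric]
    exact ENNReal.mul_lt_top (by simp) hK.lt_top
  filter_upwards [ae_eventually_notMem hsum] with x hx
  filter_upwards [hx] with k hk
  exact not_lt.1 hk

end Frequency

section DeepHolesFrequency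

theorem ae_eventually_mul_card_deepHoles_le {E : Type*} [NormedAddCommGroup E] [NormedSpace ℝ E]
    [FiniteDimensional ℝ E] [MeasurableSpace E] [BorelSpace E] {μ : Measure E}
    [IsLocallyFiniteMeasure μ] {ε : ℝ} {L p : ℕ} {π : ℕ → E → E}
    (hπ : ∀ k, IsNetProjection (2⁻¹ ^ (k * L)) (π k))
    (hε : L * (8 * 2 ^ L) ^ finrank ℝ E * ENNReal.ofReal ε ≤ 4⁻¹ ^ p) :
    ∀ᵐ x ∂μ, ∀ᶠ k in atTop, p * {b ∈ Finset.range k | x ∈ deepHoles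
      (hollowCenters μ (π (b + 1)) ε ((b + 1) * L)) (b * L) ((b + 1) * L)}.card ≤ k := by
  suffices hR : ∀ R : ℕ, ∀ᵐ x ∂μ.restrict (ball 0 R), ∀ᶠ k in atTop, p * {b ∈ Finset.range k |
      x ∈ deepHoles (hollowCenters μ (π (b + 1)) ε ((b + 1) * L)) (b * L) ((b + 1) * L)}.card ≤ k by
    rwa [← ae_restrict_iUnion_iff, iUnion_ball_nat, Measure.restrict_univ] at hR
  intro R
  refine ae_eventually_mul_card_le (K := μ (thickening 4 (ball 0 R)))
    isBounded_ball.thickening.measure_lt_top.ne fun F => ?_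
  rw [Measure.restrict_apply' measurableSet_ball, inter_comm]
  refine (measure_inter_biInter_deepHoles_le hπ F (fun k _ => k.zero_le) (ball 0 R)).trans ?_
  rw [zero_mul, pow_zero, mul_one]
  gcongr

end DeepHolesFrequency

section LocalDimension

open scoped Topology

variable {X : Type*} [MetricSpace X] [MeasurableSpace X] {μ : Measure X} {x : X} {t : ℝ}

theorem upperLocalDim_le_of_eventually_mul_rpow_le {c : ℝ} (hc : 0 < c)
    (h : ∀ᶠ r in 𝓝[>] 0, c * r ^ t ≤ μ.real (ball x r)) : upperLocalDim μ x ≤ t := by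
  have hlim : Tendsto (fun r : ℝ => ((Real.log c / Real.log r + t : ℝ) : EReal)) (𝓝[>] 0)
      (𝓝 t) := by
    refine (continuous_coe_real_ereal.tendsto t).comp ?_
    simpa using (tendsto_const_nhds.div_atBot Real.tendsto_log_nhdsGT_zero).add_const t
  rw [← hlim.limsup_eq]
  refine limsup_le_limsup ?_
  filter_upwards [h, Ioo_mem_nhdsGT one_pos] with r hr hr₀₁
  have hlog : Real.log r < 0 := Real.log_neg hr₀₁.1 hr₀₁.2
  have hpos : 0 < r ^ t := Real.rpow_pos_of_pos hr₀₁.1 t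
  have hle := Real.log_le_log (by positivity) hr
  rw [Real.log_mul hc.ne' hpos.ne', Real.log_rpow hr₀₁.1] at hle
  rw [EReal.coe_le_coe_iff, div_add' _ _ _ hlog.ne]
  exact (div_le_div_right_of_neg hlog).2 hle

theorem upperLocalDim_le_of_eventually_rpow_le [ProperSpace X] [IsFiniteMeasureOnCompacts μ]
    {b C : ℝ} (hb : 1 < b) (hC : 0 < C)
    (h : ∀ᶠ k : ℕ in atTop, b ^ (-(t * k)) ≤ μ.real (ball x (C * (b ^ k)⁻¹))) :
    upperLocalDim μ x ≤ t := by
  have hb₀ : 0 < b := one_pos.trans hb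
  have htop : Tendsto (fun r => Real.logb b (C / r)) (𝓝[>] 0) atTop :=
    (Real.tendsto_logb_atTop hb).comp (tendsto_inv_nhdsGT_zero.const_mul_atTop hC)
  refine upperLocalDim_le_of_eventually_mul_rpow_le (c := b ^ (-|t|) * C ^ (-t)) (by positivity) ?_
  filter_upwards [(tendsto_nat_ceil_atTop.comp htop).eventually h, self_mem_nhdsWithin,
    htop.eventually_ge_atTop 0] with r hk (hr : 0 < r) hlog
  set k := ⌈Real.logb b (C / r)⌉₊
  have hle : Real.logb b (C / r) ≤ k := Nat.le_ceil _
  have hlt : k < Real.logb b (C / r) + 1 := Nat.ceil_lt_add_one hlog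
  have hradius : C * (b ^ k)⁻¹ ≤ r := by
    rw [← div_eq_mul_inv, div_le_comm₀ (by positivity) hr, ← Real.rpow_natCast]
    exact (Real.logb_le_iff_le_rpow hb (by positivity)).1 hle
  have hexponent : -|t| + Real.logb b (C / r) * -t ≤ -(t * k) := by
    nlinarith [le_abs_self t, abs_nonneg t]
  calc b ^ (-|t|) * C ^ (-t) * r ^ t = b ^ (-|t| + Real.logb b (C / r) * -t) := by
        rw [Real.rpow_add hb₀, Real.rpow_mul hb₀.le, Real.rpow_logb hb₀ hb.ne' (by positivity),
          Real.div_rpow hC.le hr.le, Real.rpow_neg hr.le, div_inv_eq_mul, mul_assoc]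
    _ ≤ b ^ (-(t * k)) := Real.rpow_le_rpow_of_exponent_le hb.le hexponent
    _ ≤ μ.real (ball x r) := hk.trans
        (measureReal_mono (ball_subset_ball hradius) measure_ball_lt_top.ne)

end LocalDimension

section MeanPorous

open scoped ENNReal

theorem IsMeanPorous.ae_forall_lt_eventually_mul_le_card {X : Type*} [MetricSpace X]
    [MeasurableSpace X] {μ : Measure X} {α ρ ε : ℝ} (hμ : IsMeanPorous μ α ρ) (hε : 0 < ε) :
    ∀ᵐ x ∂μ, ∀ σ < ρ, ∀ᶠ n : ℕ in atTop,
      σ * n ≤ {i ∈ Finset.range n | i ∈ porousScales μ α ε x}.card := by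
  filter_upwards [hμ ε hε] with x hx σ hσ
  have hbdd : IsBoundedUnder (· ≥ ·) atTop fun n : ℕ =>
      ({i ∈ Finset.range n | i ∈ porousScales μ α ε x}.card : ℝ) / n :=
    isBoundedUnder_of ⟨0, fun n => by positivity⟩
  -- In `IsMeanPorous` the scales range over the image of `Finset.range n` in `ℤ`.
  have hcast (n : ℕ) : (Finset.range n >>= fun a => (pure (a : ℤ) : Finset ℤ)) =
      (Finset.range n).image Nat.cast := by
    ext a
    simp [Finset.bind_def]
  simp only [hcast, Finset.filter_image, Finset.card_image_of_injective _ Nat.cast_injective,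
    zpow_neg, zpow_natCast, ← inv_pow] at hx
  filter_upwards [eventually_lt_of_lt_liminf (hσ.trans_le hx) hbdd, eventually_gt_atTop 0]
    with n hn hn₀
  exact ((lt_div_iff₀ (by exact_mod_cast hn₀)).1 hn).le

theorem card_filter_mem_range_le {X : Type*} [MetricSpace X] {H : ℕ → ℕ → Set X} {L : ℕ}
    {P : Set ℕ} {x : X} (hP : ∀ b, ∀ i ∈ Finset.Ico (b * L) ((b + 1) * L - 6), i ∈ P →
      ∃ y ∈ H b i, dist x y ≤ 2⁻¹ ^ i / 2 + 6 * 2⁻¹ ^ ((b + 1) * L)) (k : ℕ) :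
    {i ∈ Finset.range (k * L) | i ∈ P}.card ≤
      ∑ b ∈ Finset.range k, boundaryGain (H b) (b * L) ((b + 1) * L) x + 6 * k +
        L * {b ∈ Finset.range k | x ∈ deepHoles (H b) (b * L) ((b + 1) * L)}.card := by
  induction k with
  | zero => simp
  | succ k ih =>
    have hsplit : {i ∈ Finset.range ((k + 1) * L) | i ∈ P}.card =
        {i ∈ Finset.range (k * L) | i ∈ P}.card +
          {i ∈ Finset.Ico (k * L) ((k + 1) * L) | i ∈ P}.card := by
      simp only [Finset.card_filter, Finset.range_eq_Ico]
      exact (Finset.sum_Ico_consecutive _ (Nat.zero_le _) (by gcongr; omega)).symm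
    rw [hsplit, Finset.sum_range_succ, Finset.range_add_one, Finset.filter_insert]
    split_ifs with hx
    · rw [Finset.card_insert_of_notMem (by simp)]
      have hblock : {i ∈ Finset.Ico (k * L) ((k + 1) * L) | i ∈ P}.card ≤ L :=
        (Finset.card_filter_le _ _).trans_eq (by
          rw [Nat.card_Ico, Nat.succ_mul, Nat.add_sub_cancel_left])
      linarith
    · linarith [card_filter_mem_le_boundaryGain_add hx (hP k)]

theorem upperLocalDim_le_of_eventually_two_pow_le {X : Type*} [MetricSpace X] [MeasurableSpace X]
    [ProperSpace X] {μ : Measure X} [IsFiniteMeasureOnCompacts μ] {x : X} {t : ℝ} {C : ℝ}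
    (hC : 0 < C) {K L : ℕ} (hL : L ≠ 0) {G : ℕ → ℕ}
    (hμ : ∀ᶠ k in atTop, (2 : ℝ≥0∞) ^ G k ≤ 2 ^ (K * k) * μ (ball x (C * 2⁻¹ ^ (k * L))))
    (hG : ∀ᶠ k : ℕ in atTop, (K - L * t) * k ≤ G k) : upperLocalDim μ x ≤ t := by
  refine upperLocalDim_le_of_eventually_rpow_le (one_lt_pow₀ one_lt_two hL) hC ?_
  filter_upwards [hμ, hG] with k hμk hGk
  have hreal : (2 : ℝ) ^ G k ≤ 2 ^ (K * k) * μ.real (ball x (C * 2⁻¹ ^ (k * L))) := by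
    simpa [Measure.real] using ENNReal.toReal_mono
      (ENNReal.mul_ne_top (by simp) measure_ball_lt_top.ne) hμk
  rw [← pow_mul, mul_comm L, ← inv_pow, ← Real.rpow_natCast 2 L,
    ← Real.rpow_mul two_pos.le]
  refine le_trans ?_ ((inv_mul_le_iff₀ (by positivity)).2 hreal)
  rw [← Real.rpow_natCast, ← Real.rpow_natCast, ← Real.rpow_neg two_pos.le,
    ← Real.rpow_add two_pos]
  refine Real.rpow_le_rpow_of_exponent_le one_le_two ?_
  push_cast
  linarith

variable {E : Type*} [NormedAddCommGroup E] [NormedSpace ℝ E] [FiniteDimensional ℝ E]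
  [MeasurableSpace E] {μ : Measure E}

theorem ae_eventually_two_pow_sum_boundaryGain_le {H : ℕ → ℕ → Set E} {L : ℕ} {π : ℕ → E → E}
    (hπ : ∀ k, IsNetProjection (2⁻¹ ^ (k * L)) (π k)) :
    ∀ᵐ x ∂μ, ∀ᶠ k in atTop,
      (2 : ℝ≥0∞) ^ ∑ b ∈ Finset.range k, boundaryGain (H b) (b * L) ((b + 1) * L) x ≤
        2 ^ ((8 + 6 * finrank ℝ E + finrank ℝ E * L) * k) * μ (ball x (3 * 2⁻¹ ^ (k * L))) := by
  have hsum (k : ℕ) (a : E) : ∑' b, transitionWeight π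
      (fun j x => 2 ^ boundaryGain (H j) (j * L) ((j + 1) * L) x) k a b ≤
        2 ^ (7 + 6 * finrank ℝ E + finrank ℝ E * L) := by
    simpa [Nat.succ_mul, transitionWeight] using
      tsum_iSup_two_pow_boundaryGain_le (H := H k) (by gcongr; omega) (hπ k) (hπ (k + 1)) a
  filter_upwards [ae_eventually_prod_le_mul_measure_fiber (μ := μ)
    (fun k => countable_of_pairwise_le_dist (two_inv_pow_pos _) (hπ k).pairwise_le_dist)
    (by simp) (by simp) hsum] with x hx
  filter_upwards [hx] with k hk
  rw [← Finset.prod_pow_eq_pow_sum, pow_mul]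
  have hbase : (2 : ℝ≥0∞) * 2 ^ (7 + 6 * finrank ℝ E + finrank ℝ E * L) =
      2 ^ (8 + 6 * finrank ℝ E + finrank ℝ E * L) := by
    rw [← pow_succ']
    congr 1
    omega
  refine hk.trans (mul_le_mul' (by rw [hbase]) (measure_mono fun z hz => ?_))
  have hpos := two_inv_pow_pos (k * L)
  have hzx : π k z = π k x := hz
  rw [mem_ball]
  linarith [dist_triangle_right z x (π k x), (hπ k).dist_le x, hzx ▸ (hπ k).dist_le z]

variable [BorelSpace E] [IsLocallyFiniteMeasure μ] {α ρ : ℝ}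

theorem IsMeanPorous.ae_upperLocalDim_le_add (hμ : IsMeanPorous μ α ρ) (hα₀ : 0 < α)
    (hα₁ : α ≤ 1) {L : ℕ} (hL : L ≠ 0) (hαL : 1 - 2 * α ≤ 2 * 2⁻¹ ^ L) {p : ℕ} (hp : 0 < p) :
    ∀ᵐ x ∂μ, upperLocalDim μ x ≤
      ((finrank ℝ E - ρ + 2 / p + (6 * finrank ℝ E + 14) / L : ℝ) : EReal) := by
  choose π hπ using fun k : ℕ => exists_isNetProjection (X := E) (two_inv_pow_pos (k * L)).le
  obtain ⟨ε, hε₀, hε⟩ : ∃ ε : ℝ, 0 < ε ∧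
      L * (8 * 2 ^ L) ^ finrank ℝ E * ENNReal.ofReal ε ≤ 4⁻¹ ^ p := by
    obtain ⟨ε, hε₀, hε⟩ := ENNReal.exists_nnreal_pos_mul_lt
      (a := L * (8 * 2 ^ L) ^ finrank ℝ E) (b := 4⁻¹ ^ p) (by finiteness) (by simp)
    exact ⟨ε, hε₀, by simpa [mul_comm] using hε.le⟩
  let H (b : ℕ) : ℕ → Set E := hollowCenters μ (π (b + 1)) ε ((b + 1) * L)
  have hp₀ : (0 : ℝ) < p := by exact_mod_cast hp
  filter_upwards [hμ.ae_forall_lt_eventually_mul_le_card hε₀,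
    ae_eventually_mul_card_deepHoles_le hπ hε,
    ae_eventually_two_pow_sum_boundaryGain_le (H := H) hπ] with x hporous hdeep hgain
  refine upperLocalDim_le_of_eventually_two_pow_le three_pos hL hgain ?_
  have hblocks : Tendsto (fun k : ℕ => k * L) atTop atTop :=
    tendsto_id.atTop_mul_const' (Nat.pos_of_ne_zero hL)
  filter_upwards [hblocks.eventually (hporous (ρ - 1 / p) (by simpa using hp)), hdeep]
    with k hmany hdeep
  have hrare : ({b ∈ Finset.range k | x ∈ deepHoles (H b) (b * L) ((b + 1) * L)}.card : ℝ) ≤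
      k / p := (le_div_iff₀' hp₀).2 (by exact_mod_cast hdeep)
  have hgain := hmany.trans (Nat.cast_le.2 (card_filter_mem_range_le (H := H)
    (fun b i hi => exists_mem_hollowCenters_of_mem_porousScales (hπ (b + 1)) hα₀ hα₁
      (by rwa [Nat.succ_mul, Nat.add_sub_cancel_left]) hi) k))
  have hL₀ : (L : ℝ) ≠ 0 := Nat.cast_ne_zero.2 hL
  push_cast at hgain ⊢
  calc _ = (ρ - 1 / p) * (k * L) - 6 * k - L * (k / p) := by
        field_simp
        ring
    _ ≤ _ := by linarith [mul_le_mul_of_nonneg_left hrare L.cast_nonneg]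

theorem IsMeanPorous.ae_upperLocalDim_le (hμ : IsMeanPorous μ α ρ) (hα₀ : 0 < α)
    (hα₁ : α ≤ 1) {L : ℕ} (hL : L ≠ 0) (hαL : 1 - 2 * α ≤ 2 * 2⁻¹ ^ L) :
    ∀ᵐ x ∂μ, upperLocalDim μ x ≤
      ((finrank ℝ E - ρ + (6 * finrank ℝ E + 14) / L : ℝ) : EReal) := by
  have hall := ae_all_iff.2 fun p : ℕ =>
    hμ.ae_upperLocalDim_le_add hα₀ hα₁ hL hαL p.succ_pos
  filter_upwards [hall] with x hx
  have hlim : Tendsto (fun p : ℕ => finrank ℝ E - ρ + 2 / ((p.succ : ℕ) : ℝ) +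
      (6 * finrank ℝ E + 14) / L) atTop (nhds (finrank ℝ E - ρ + (6 * finrank ℝ E + 14) / L)) := by
    simpa using (((tendsto_const_div_atTop_nhds_zero_nat (2 : ℝ)).comp
      (tendsto_add_atTop_nat 1)).const_add (finrank ℝ E - ρ)).add_const _
  exact ge_of_tendsto' ((continuous_coe_real_ereal.tendsto _).comp hlim) hx

end MeanPorous

theorem exists_ne_zero_le_two_mul_two_inv_pow {u : ℝ} (hu₀ : 0 < u) (hu₁ : u < 1) :
    ∃ L : ℕ, L ≠ 0 ∧ u ≤ 2 * 2⁻¹ ^ L ∧ |Real.logb 2 u| ≤ L := by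
  have hfloor := Nat.floor_le (abs_nonneg (Real.logb 2 u))
  refine ⟨⌊|Real.logb 2 u|⌋₊ + 1, Nat.succ_ne_zero _, ?_, by
    exact_mod_cast (Nat.lt_floor_add_one _).le⟩
  rw [abs_of_neg (Real.logb_neg one_lt_two hu₀ hu₁)] at hfloor ⊢
  calc u = 2 ^ Real.logb 2 u := (Real.rpow_logb two_pos (by norm_num) hu₀).symm
    _ ≤ 2 ^ (-(⌊-Real.logb 2 u⌋₊ : ℝ)) :=
        Real.rpow_le_rpow_of_exponent_le one_le_two (by linarith)
    _ = 2 * 2⁻¹ ^ (⌊-Real.logb 2 u⌋₊ + 1) := by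
        rw [Real.rpow_neg two_pos.le, Real.rpow_natCast, pow_succ', inv_pow,
          mul_inv_cancel_left₀ two_ne_zero]

theorem stmt7_general {E : Type*} [NormedAddCommGroup E] [NormedSpace ℝ E] [FiniteDimensional ℝ E]
    [MeasurableSpace E] [BorelSpace E] (μ : Measure E) [IsLocallyFiniteMeasure μ] {α ρ : ℝ}
    (hα : α ∈ Ioo 0 (1 / 2)) (hμ : IsMeanPorous μ α ρ) :
    upperPackingDim μ ≤
      ((finrank ℝ E - ρ + (6 * finrank ℝ E + 14) / |Real.logb 2 (1 - 2 * α)| : ℝ) : EReal) := by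
  obtain ⟨L, hL, hαL, hlog⟩ := exists_ne_zero_le_two_mul_two_inv_pow (u := 1 - 2 * α)
    (by linarith [hα.2]) (by linarith [hα.1])
  have hlog₀ : 0 < |Real.logb 2 (1 - 2 * α)| :=
    abs_pos.2 (Real.logb_neg one_lt_two (by linarith [hα.2]) (by linarith [hα.1])).ne
  refine essSup_le_of_ae_le _ ?_
  filter_upwards [hμ.ae_upperLocalDim_le hα.1 (by linarith [hα.2]) hL hαL] with x hx
  exact hx.trans (EReal.coe_le_coe (by gcongr))

/-- (Large-porosity bound.) For every `d` there is a constant `C_d > 0`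
such that every mean `(α,ρ)`-porous Borel probability measure on `ℝ^d`
(with `α ∈ (0,1/2)`, `ρ ∈ (0,1]`) has upper packing dimension at most
`d − ρ + C_d/|log(1−2α)|`. -/
theorem stmt7 (d : ℕ) (hd : 0 < d) :
    ∃ C : ℝ, 0 < C ∧ ∀ α ρ : ℝ, α ∈ Set.Ioo (0 : ℝ) (1 / 2) → ρ ∈ Set.Ioc (0 : ℝ) 1 →
      ∀ μ : Measure (EuclideanSpace ℝ (Fin d)), IsProbabilityMeasure μ →
        IsMeanPorous μ α ρ →
          upperPackingDim μ ≤
            (((d : ℝ) - ρ + C / |Real.logb 2 (1 - 2 * α)| : ℝ) : EReal) := by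
  exact ⟨6 * d + 14, by positivity, fun α ρ hα _ μ _ hμ => by simpa using stmt7_general μ hα hμ⟩
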